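/- arXiv:2303.15183 — 4 statements merged into one kernel-verified Lean document; each statement's English description precedes it below -/
import Mathlib

section
/- Let d ≥ 1, let μ be a probability measure on ℝ^d (i.e., on Fin d → ℝ), and let f : (Fin d → ℝ) → ℝ be differentiable, with the product ∂f_i · ∂f_j of any two first-order partial derivatives integrable with respect to μ. Define c(i,j) = |∫ ∂f_i(x) ∂f_j(x) dμ(x)| for i, j ∈ {1,…,d}, the derivative-based importance imp(u) = Σ_{i∈u} Σ_{j∈u, j≥i} c(i,j) for every subset u ⊆ {1,…,d} (so imp(∅)=0), and the DerSHAP value φ_i = ∫ (∂f_i(x))² dμ(x) + (1/2) Σ_{j≠i} c(i,j). Then for every i ∈ {1,…,d}, the Shapley value of player i for the game imp equals φ_i; that is, (1/d) Σ_{u ⊆ {1,…,d}\{i}} binom(d−1,|u|)⁻¹ (imp(u ∪ {i}) − imp(u)) = φ_i. -/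
open MeasureTheory Finset

/-!
The marginal contribution of a player `i` to a coalition `u` in the game of pairwise interactions
`c` is `c i i + ∑ j ∈ u, c i j`. The Shapley weights are a probability distribution on the
coalitions of the other players, and this distribution is invariant under complementation, so every
`j ≠ i` belongs to a random coalition with probability `1 / 2`. Hence the Shapley value of `i` is
`c i i` plus half the sum of the other `c i j`.
-/

section InverseBinomialWeights

variable {ι K : Type*}

lemma sum_powerset_inv_choose_card [DivisionSemiring K] [CharZero K] (s : Finset ι) :
    ∑ u ∈ s.powerset, ((#s).choose #u : K)⁻¹ = #s + 1 := by
  have choose_smul_inv_choose : ∀ k ∈ range (#s + 1),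
      (#s).choose k • ((#s).choose k : K)⁻¹ = 1 := fun k hk => by
    rw [nsmul_eq_mul, mul_inv_cancel₀]
    exact_mod_cast (Nat.choose_pos (mem_range_succ_iff.mp hk)).ne'
  rw [sum_powerset_apply_card (fun k => ((#s).choose k : K)⁻¹),
    sum_congr rfl choose_smul_inv_choose]
  simp

lemma sum_powerset_inv_choose_card_mul_sdiff [DecidableEq ι] [DivisionSemiring K] (s : Finset ι)
    (F : Finset ι → K) :
    ∑ u ∈ s.powerset, ((#s).choose #u : K)⁻¹ * F (s \ u)
      = ∑ u ∈ s.powerset, ((#s).choose #u : K)⁻¹ * F u := by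
  refine sum_nbij' (s \ ·) (s \ ·) (by simp) (by simp) (by simp) (by simp) fun u hu => ?_
  have hus : u ⊆ s := mem_powerset.mp hu
  rw [card_sdiff_of_subset hus, Nat.choose_symm (card_le_card hus)]

lemma sum_powerset_inv_choose_card_mul_sum [Field K] [CharZero K] (s : Finset ι) (a : ι → K) :
    ∑ u ∈ s.powerset, ((#s).choose #u : K)⁻¹ * ∑ j ∈ u, a j
      = (#s + 1) / 2 * ∑ j ∈ s, a j := by
  classical
  have two_mul_sum :
      2 * ∑ u ∈ s.powerset, ((#s).choose #u : K)⁻¹ * ∑ j ∈ u, a j = (#s + 1) * ∑ j ∈ s, a j :=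
    calc
      _ = ∑ u ∈ s.powerset, ((#s).choose #u : K)⁻¹ * ∑ j ∈ s \ u, a j
          + ∑ u ∈ s.powerset, ((#s).choose #u : K)⁻¹ * ∑ j ∈ u, a j := by
        rw [sum_powerset_inv_choose_card_mul_sdiff s fun u => ∑ j ∈ u, a j, two_mul]
      _ = ∑ u ∈ s.powerset, ((#s).choose #u : K)⁻¹ * ∑ j ∈ s, a j := by
        rw [← sum_add_distrib]
        refine sum_congr rfl fun u hu => ?_
        rw [← mul_add, sum_sdiff (mem_powerset.mp hu)]
      _ = (#s + 1) * ∑ j ∈ s, a j := by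
        rw [← sum_mul, sum_powerset_inv_choose_card]
  linear_combination two_mul_sum / 2

end InverseBinomialWeights

section ShapleyValue

variable {ι K : Type*} [Fintype ι] [DecidableEq ι] [Field K]

/-- The Shapley value of player `i` in the cooperative game with characteristic function `v`. -/
def shapleyValue (v : Finset ι → K) (i : ι) : K :=
  (1 / Fintype.card ι) * ∑ u ∈ (univ \ {i}).powerset,
    ((Fintype.card ι - 1).choose #u : K)⁻¹ * (v (insert i u) - v u)

lemma shapleyValue_eq_of_marginal_eq_add_sum [CharZero K] {v : Finset ι → K} {i : ι} {b : K}
    {a : ι → K} (marginal : ∀ u, i ∉ u → v (insert i u) - v u = b + ∑ j ∈ u, a j) :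
    shapleyValue v i = b + (1 / 2) * ∑ j with j ≠ i, a j := by
  have others : (univ : Finset ι) \ {i} = ({j | j ≠ i} : Finset ι) := by ext; simp
  have card_pos : 0 < Fintype.card ι := Fintype.card_pos_iff.mpr ⟨i⟩
  have card_others : #{j | j ≠ i} = Fintype.card ι - 1 := by
    rw [filter_ne', card_erase_of_mem (mem_univ i), card_univ]
  have card_others_add_one : (#{j | j ≠ i} : K) + 1 = Fintype.card ι := by
    rw [card_others]
    exact_mod_cast Nat.sub_add_cancel card_pos
  have card_ne_zero : (Fintype.card ι : K) ≠ 0 := by exact_mod_cast card_pos.ne'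
  calc
    shapleyValue v i
      = (1 / Fintype.card ι) * ∑ u ∈ ({j | j ≠ i} : Finset ι).powerset,
          ((#{j | j ≠ i}).choose #u : K)⁻¹ * (b + ∑ j ∈ u, a j) := by
        rw [shapleyValue, others, card_others]
        congr 1
        refine sum_congr rfl fun u hu => ?_
        rw [marginal u fun hiu => by simpa using mem_powerset.mp hu hiu]
    _ = (1 / Fintype.card ι) *
          (Fintype.card ι * b + Fintype.card ι / 2 * ∑ j with j ≠ i, a j) := by
        simp only [mul_add, sum_add_distrib]
        rw [← sum_mul, sum_powerset_inv_choose_card, sum_powerset_inv_choose_card_mul_sum,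
          card_others_add_one]
    _ = b + (1 / 2) * ∑ j with j ≠ i, a j := by field_simp

end ShapleyValue

section PairwiseGame

variable {ι M K : Type*} [LinearOrder ι]

/-- The game in which a coalition is worth the total interaction `c` of its unordered pairs of
players, each player being also paired with itself. The order on the players only serves to count
every pair once. -/
def pairwiseGame [AddCommMonoid M] (c : ι → ι → M) (u : Finset ι) : M :=
  ∑ i ∈ u, ∑ j ∈ u with i ≤ j, c i j

lemma pairwiseGame_insert [AddCommMonoid M] {c : ι → ι → M} (c_symm : ∀ i j, c i j = c j i)
    {i : ι} {u : Finset ι} (hi : i ∉ u) :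
    pairwiseGame c (insert i u) = pairwiseGame c u + (c i i + ∑ j ∈ u, c i j) := by
  have sum_split : ∑ j ∈ u, c i j
      = ∑ j ∈ u, (if i ≤ j then c i j else 0) + ∑ j ∈ u, (if j ≤ i then c j i else 0) := by
    rw [← sum_add_distrib]
    refine sum_congr rfl fun j hj => ?_
    rcases lt_or_gt_of_ne (ne_of_mem_of_not_mem hj hi) with hji | hij
    · simp [hji.le, hji.not_ge, c_symm i j]
    · simp [hij.le, hij.not_ge]
  simp only [pairwiseGame, sum_filter, sum_insert hi, sum_add_distrib, le_refl, if_true, sum_split]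
  abel

theorem shapleyValue_pairwiseGame [Fintype ι] [Field K] [CharZero K] {c : ι → ι → K}
    (c_symm : ∀ i j, c i j = c j i) (i : ι) :
    shapleyValue (pairwiseGame c) i = c i i + (1 / 2) * ∑ j with j ≠ i, c i j :=
  shapleyValue_eq_of_marginal_eq_add_sum fun _ hi => by
    rw [pairwiseGame_insert c_symm hi, add_sub_cancel_left]

end PairwiseGame

theorem dershap_is_shapley_value_general {ι Ω : Type*} [Fintype ι] [LinearOrder ι]
    [MeasurableSpace Ω] {μ : Measure Ω} {g : ι → Ω → ℝ}
    (_integrable_mul : ∀ i j, Integrable (fun x => g i x * g j x) μ) (i : ι) :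
    shapleyValue (pairwiseGame fun j k => |∫ x, g j x * g k x ∂μ|) i
      = (∫ x, g i x ^ 2 ∂μ) + (1 / 2) * ∑ j with j ≠ i, |∫ x, g i x * g j x ∂μ| := by
  have abs_integral_mul_self : |∫ x, g i x * g i x ∂μ| = ∫ x, g i x ^ 2 ∂μ := by
    simp only [← pow_two]
    exact abs_of_nonneg (integral_nonneg fun x => sq_nonneg (g i x))
  rw [shapleyValue_pairwiseGame (fun j k => by simp only [mul_comm]), abs_integral_mul_self]

/-- The Shapley value of player `i` for the derivative-based importance function `imp`
equals the DerSHAP value `φ i`. -/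
theorem dershap_is_shapley_value
    (d : ℕ) (hd : 1 ≤ d)
    (μ : Measure (Fin d → ℝ)) [IsProbabilityMeasure μ]
    (f : (Fin d → ℝ) → ℝ) (hf : Differentiable ℝ f)
    (hint : ∀ i j : Fin d,
      Integrable (fun x => fderiv ℝ f x (Pi.single i 1) * fderiv ℝ f x (Pi.single j 1)) μ)
    (c : Fin d → Fin d → ℝ)
    (hc : ∀ i j : Fin d,
      c i j = |∫ x, fderiv ℝ f x (Pi.single i 1) * fderiv ℝ f x (Pi.single j 1) ∂μ|)
    (imp : Finset (Fin d) → ℝ)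
    (himp : ∀ u : Finset (Fin d),
      imp u = ∑ i ∈ u, ∑ j ∈ u.filter (fun j => i ≤ j), c i j)
    (φ : Fin d → ℝ)
    (hφ : ∀ i : Fin d,
      φ i = (∫ x, (fderiv ℝ f x (Pi.single i 1)) ^ 2 ∂μ)
        + (1 / 2) * ∑ j ∈ univ.filter (fun j => j ≠ i), c i j)
    (i : Fin d) :
    (1 / d : ℝ) * ∑ u ∈ ((univ : Finset (Fin d)) \ {i}).powerset,
        (((d - 1).choose u.card : ℕ) : ℝ)⁻¹ * (imp (insert i u) - imp u)
      = φ i := by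
  simpa only [shapleyValue, pairwiseGame, Fintype.card_fin, himp, hφ, hc] using
    dershap_is_shapley_value_general (g := fun j x => fderiv ℝ f x (Pi.single j 1)) hint i
end

section
/- Let d ≥ 1, let μ be a probability measure on ℝ^d (i.e., on Fin d → ℝ), and let f : (Fin d → ℝ) → ℝ be differentiable, with the product ∂f_i · ∂f_j of any two first-order partial derivatives integrable with respect to μ. Define c(i,j) = |∫ ∂f_i(x) ∂f_j(x) dμ(x)|, imp(u) = Σ_{i∈u} Σ_{j∈u, j≥i} c(i,j) for u ⊆ {1,…,d}, and φ_i = ∫ (∂f_i(x))² dμ(x) + (1/2) Σ_{j≠i} c(i,j). Then the DerSHAP values satisfy the efficiency property: Σ_{i=1}^d φ_i = imp({1,…,d}). -/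
open MeasureTheory Finset

/-! The diagonal weight `c i i` is the second moment of `∂f_i`, so `φ i` keeps the whole weight of
the pair `(i, i)` and half the weight of each pair `{i, j}` with `j ≠ i`. Summing over `i` therefore
counts every unordered pair once, as the importance does by requiring `i ≤ j`. -/

section PairSums

variable {ι M : Type*} [AddCommMonoid M]

theorem sum_sum_le_eq_sum_diag_add_sum_sum_lt [PartialOrder ι] [DecidableLE ι] [DecidableLT ι]
    (s : Finset ι) (c : ι → ι → M) :
    ∑ i ∈ s, ∑ j ∈ s with i ≤ j, c i j = ∑ i ∈ s, c i i + ∑ i ∈ s, ∑ j ∈ s with i < j, c i j := by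
  classical
  rw [← sum_add_distrib]
  refine sum_congr rfl fun i hi => ?_
  have hinsert : {j ∈ s | i ≤ j} = insert i {j ∈ s | i < j} := by
    ext j
    grind [le_iff_eq_or_lt]
  rw [hinsert, sum_insert (by simp)]

theorem sum_sum_ne_eq_two_nsmul_sum_sum_lt [LinearOrder ι] (s : Finset ι) {c : ι → ι → M}
    (hc : ∀ i j, c i j = c j i) :
    ∑ i ∈ s, ∑ j ∈ s with j ≠ i, c i j = 2 • ∑ i ∈ s, ∑ j ∈ s with i < j, c i j := by
  have hsplit (i : ι) : ∑ j ∈ s with j ≠ i, c i j =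
      ∑ j ∈ s with j < i, c i j + ∑ j ∈ s with i < j, c i j := by
    have hdisj : Disjoint {j ∈ s | j < i} {j ∈ s | i < j} :=
      disjoint_filter.2 fun _ _ => lt_asymm
    simp only [← sum_union hdisj, ← filter_or, ne_iff_lt_or_gt]
  have hswap : ∑ i ∈ s, ∑ j ∈ s with j < i, c i j = ∑ i ∈ s, ∑ j ∈ s with i < j, c i j := by
    simp only [sum_filter]
    rw [sum_comm]
    simp only [hc]
  simp only [hsplit, sum_add_distrib, hswap, two_nsmul]

end PairSums

theorem dershap_efficiency_general {ι K : Type*} [LinearOrder ι] [DivisionSemiring K]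
    [NeZero (2 : K)] {c : ι → ι → K} (hc : ∀ i j, c i j = c j i) (s : Finset ι) :
    ∑ i ∈ s, (c i i + (1 / 2) * ∑ j ∈ s with j ≠ i, c i j) =
      ∑ i ∈ s, ∑ j ∈ s with i ≤ j, c i j := by
  rw [sum_add_distrib, ← mul_sum, sum_sum_ne_eq_two_nsmul_sum_sum_lt s hc, nsmul_eq_mul,
    Nat.cast_ofNat, one_div, inv_mul_cancel_left₀ two_ne_zero,
    sum_sum_le_eq_sum_diag_add_sum_sum_lt]

theorem integral_sq_eq_abs_integral_mul_self {Ω : Type*} [MeasurableSpace Ω] (μ : Measure Ω)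
    (g : Ω → ℝ) : ∫ x, g x ^ 2 ∂μ = |∫ x, g x * g x ∂μ| := by
  have hnonneg : 0 ≤ ∫ x, g x * g x ∂μ := integral_nonneg fun x => mul_self_nonneg (g x)
  simp only [sq, abs_of_nonneg hnonneg]

/-- Efficiency property of the DerSHAP values: they sum to the derivative-based
importance of the full index set. -/
theorem dershap_efficiency
    (d : ℕ) (hd : 1 ≤ d)
    (μ : Measure (Fin d → ℝ)) [IsProbabilityMeasure μ]
    (f : (Fin d → ℝ) → ℝ) (hf : Differentiable ℝ f)
    (hint : ∀ i j : Fin d,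
      Integrable (fun x => fderiv ℝ f x (Pi.single i 1) * fderiv ℝ f x (Pi.single j 1)) μ)
    (c : Fin d → Fin d → ℝ)
    (hc : ∀ i j : Fin d,
      c i j = |∫ x, fderiv ℝ f x (Pi.single i 1) * fderiv ℝ f x (Pi.single j 1) ∂μ|)
    (imp : Finset (Fin d) → ℝ)
    (himp : ∀ u : Finset (Fin d),
      imp u = ∑ i ∈ u, ∑ j ∈ u.filter (fun j => i ≤ j), c i j)
    (φ : Fin d → ℝ)
    (hφ : ∀ i : Fin d,
      φ i = (∫ x, (fderiv ℝ f x (Pi.single i 1)) ^ 2 ∂μ)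
        + (1 / 2) * ∑ j ∈ univ.filter (fun j => j ≠ i), c i j) :
    ∑ i : Fin d, φ i = imp univ := by
  simp only [hφ, himp, integral_sq_eq_abs_integral_mul_self, ← hc]
  exact dershap_efficiency_general (fun i j => by simp only [hc, mul_comm]) univ
end

section
/- Let d ≥ 1, let μ be a probability measure on ℝ^d (i.e., on Fin d → ℝ), and let f : (Fin d → ℝ) → ℝ be differentiable, with the product ∂f_i · ∂f_j of any two first-order partial derivatives integrable with respect to μ. Define c(i,j) = |∫ ∂f_i(x) ∂f_j(x) dμ(x)|, imp(u) = Σ_{i∈u} Σ_{j∈u, j≥i} c(i,j) for u ⊆ {1,…,d}, and φ_i = ∫ (∂f_i(x))² dμ(x) + (1/2) Σ_{j≠i} c(i,j). Fix i ∈ {1,…,d}. If imp(u ∪ {i}) = imp(u) for every subset u ⊆ {1,…,d} \ {i}, then φ_i = 0 (the dummy property). -/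
open MeasureTheory Finset

/-! Since `c(i, i) = ∫ (∂f_i)² dμ` is the importance of `{i}`, the dummy hypothesis at `u = ∅` forces
`∂f_i = 0` almost everywhere, and every integrand in `φ_i` is a multiple of `∂f_i`. -/

section DerShap

variable {Ω ι : Type*} [MeasurableSpace Ω] {μ : Measure Ω} {g : ι → Ω → ℝ} {i : ι}

variable (μ g) in
/-- The quantity `c(i, j)` of the paper, with an arbitrary family `g` in the role of the partial
derivatives of `f`. -/
noncomputable def derInteraction (i j : ι) : ℝ :=
  |∫ x, g i x * g j x ∂μ|

variable (μ g) in
/-- The derivative-based importance `imp(u)` of a set of inputs; the order on `ι` serves to count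
each unordered pair of inputs once. -/
noncomputable def derImportance [Preorder ι] [DecidableLE ι] (u : Finset ι) : ℝ :=
  ∑ i ∈ u, ∑ j ∈ u with i ≤ j, derInteraction μ g i j

variable (μ g) in
/-- The DerSHAP value `φ_i`, with an arbitrary family `g` in the role of the partial derivatives
of `f`. -/
noncomputable def derShapValue [Fintype ι] [DecidableEq ι] (i : ι) : ℝ :=
  (∫ x, g i x ^ 2 ∂μ) + (1 / 2) * ∑ j with j ≠ i, derInteraction μ g i j

theorem derInteraction_self : derInteraction μ g i i = ∫ x, g i x ^ 2 ∂μ := by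
  simp only [derInteraction, ← sq]
  exact abs_of_nonneg (integral_nonneg fun x => sq_nonneg (g i x))

theorem derInteraction_self_eq_zero_iff (hg : Integrable (fun x => g i x ^ 2) μ) :
    derInteraction μ g i i = 0 ↔ g i =ᵐ[μ] 0 := by
  rw [derInteraction_self, integral_eq_zero_iff_of_nonneg (fun x => sq_nonneg (g i x)) hg]
  simp only [Filter.EventuallyEq, Pi.zero_apply, sq_eq_zero_iff]

theorem derInteraction_eq_zero_of_ae_eq_zero (hi : g i =ᵐ[μ] 0) (j : ι) :
    derInteraction μ g i j = 0 := by
  rw [derInteraction, abs_eq_zero]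
  refine integral_eq_zero_of_ae ?_
  filter_upwards [hi] with x hx
  simp [hx]

theorem derImportance_empty [Preorder ι] [DecidableLE ι] : derImportance μ g ∅ = 0 :=
  sum_empty

theorem derImportance_singleton [Preorder ι] [DecidableLE ι] :
    derImportance μ g {i} = derInteraction μ g i i := by
  simp [derImportance, filter_singleton]

theorem derShapValue_eq_zero_of_ae_eq_zero [Fintype ι] [DecidableEq ι] (hi : g i =ᵐ[μ] 0) :
    derShapValue μ g i = 0 := by
  rw [derShapValue, ← derInteraction_self]
  simp only [derInteraction_eq_zero_of_ae_eq_zero hi, sum_const_zero, mul_zero, add_zero]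

theorem dershap_dummy_general [Fintype ι] [DecidableEq ι] [Preorder ι] [DecidableLE ι]
    (hg : Integrable (fun x => g i x ^ 2) μ)
    (hdummy : derImportance μ g {i} = derImportance μ g ∅) :
    derShapValue μ g i = 0 := by
  rw [derImportance_singleton, derImportance_empty, derInteraction_self_eq_zero_iff hg] at hdummy
  exact derShapValue_eq_zero_of_ae_eq_zero hdummy

end DerShap

/-- Dummy property of the DerSHAP values: if adding input `i` never changes the
derivative-based importance, then the DerSHAP value of `i` is zero. -/
theorem dershap_dummy
    (d : ℕ) (hd : 1 ≤ d)
    (μ : Measure (Fin d → ℝ)) [IsProbabilityMeasure μ]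
    (f : (Fin d → ℝ) → ℝ) (hf : Differentiable ℝ f)
    (hint : ∀ i j : Fin d,
      Integrable (fun x => fderiv ℝ f x (Pi.single i 1) * fderiv ℝ f x (Pi.single j 1)) μ)
    (c : Fin d → Fin d → ℝ)
    (hc : ∀ i j : Fin d,
      c i j = |∫ x, fderiv ℝ f x (Pi.single i 1) * fderiv ℝ f x (Pi.single j 1) ∂μ|)
    (imp : Finset (Fin d) → ℝ)
    (himp : ∀ u : Finset (Fin d),
      imp u = ∑ i ∈ u, ∑ j ∈ u.filter (fun j => i ≤ j), c i j)
    (φ : Fin d → ℝ)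
    (hφ : ∀ i : Fin d,
      φ i = (∫ x, (fderiv ℝ f x (Pi.single i 1)) ^ 2 ∂μ)
        + (1 / 2) * ∑ j ∈ univ.filter (fun j => j ≠ i), c i j)
    (i : Fin d)
    (hdummy : ∀ u : Finset (Fin d), u ⊆ univ \ {i} → imp (insert i u) = imp u) :
    φ i = 0 := by
  obtain rfl : c = derInteraction μ fun i x => fderiv ℝ f x (Pi.single i 1) := funext₂ hc
  obtain rfl : imp = derImportance μ fun i x => fderiv ℝ f x (Pi.single i 1) := funext himp
  rw [hφ]
  exact dershap_dummy_general (by simpa only [sq] using hint i i) (hdummy ∅ (empty_subset _))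
end

section
/- Let d ≥ 1, let μ be a probability measure on ℝ^d (i.e., on Fin d → ℝ), and let f : (Fin d → ℝ) → ℝ be differentiable, with the product ∂f_i · ∂f_j of any two first-order partial derivatives integrable with respect to μ. Define c(i,j) = |∫ ∂f_i(x) ∂f_j(x) dμ(x)|, imp(u) = Σ_{i∈u} Σ_{j∈u, j≥i} c(i,j) for u ⊆ {1,…,d}, and φ_i = ∫ (∂f_i(x))² dμ(x) + (1/2) Σ_{j≠i} c(i,j). Fix distinct indices k₁, k₂ ∈ {1,…,d}. If imp(u ∪ {k₁}) = imp(u ∪ {k₂}) for every subset u ⊆ {1,…,d} with u ∩ {k₁,k₂} = ∅, then φ_{k₁} = φ_{k₂} (the symmetry property). -/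
open MeasureTheory Finset

/-!
The importance of sets with at most two elements recovers the whole interaction matrix:
`imp {k} = c k k` and `imp {k, j} = c k k + c j j + c k j`. Equal contributions of `k₁` and `k₂`
to the empty set and to singletons therefore already make row `k₂` of `c` the image of row `k₁`
under the transposition of `k₁` and `k₂`. A DerSHAP value depends only on the diagonal entry of
its row and on the sum of the remaining entries, and the transposition preserves both.
-/

section Importance

variable {ι M : Type*} [LinearOrder ι]

/-- The importance of a set `u` of inputs with pairwise interactions `c`. Each unordered pair of
inputs, the diagonal ones included, is counted once, through the constraint `i ≤ j`. -/
def importance [AddCommMonoid M] (c : ι → ι → M) (u : Finset ι) : M :=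
  ∑ i ∈ u, ∑ j ∈ u with i ≤ j, c i j

theorem importance_singleton [AddCommMonoid M] (c : ι → ι → M) (k : ι) :
    importance c {k} = c k k := by
  simp [importance, sum_filter]

theorem importance_pair [AddCommMonoid M] {c : ι → ι → M} (hc : ∀ i j, c i j = c j i)
    {k j : ι} (hkj : k ≠ j) :
    importance c {k, j} = c k k + c j j + c k j := by
  simp only [importance, sum_filter, sum_pair hkj, le_refl, if_true]
  rcases hkj.lt_or_gt with h | h
  · rw [if_pos h.le, if_neg h.not_ge, zero_add, add_right_comm]
  · rw [if_neg h.not_ge, if_pos h.le, add_zero, hc j k, add_assoc, add_comm (c k j)]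

theorem eq_apply_swap_of_importance_eq [AddCancelCommMonoid M] {c : ι → ι → M}
    (hc : ∀ i j, c i j = c j i) {k₁ k₂ : ι}
    (hsingle : importance c {k₁} = importance c {k₂})
    (hpair : ∀ j, j ≠ k₁ → j ≠ k₂ → importance c {k₁, j} = importance c {k₂, j}) (j : ι) :
    c k₁ j = c k₂ (Equiv.swap k₁ k₂ j) := by
  have hdiag : c k₁ k₁ = c k₂ k₂ := by simpa only [importance_singleton] using hsingle
  rcases eq_or_ne j k₁ with rfl | hj₁
  · rw [Equiv.swap_apply_left, hdiag]
  rcases eq_or_ne j k₂ with rfl | hj₂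
  · rw [Equiv.swap_apply_right, hc]
  have h := hpair j hj₁ hj₂
  rw [importance_pair hc hj₁.symm, importance_pair hc hj₂.symm, hdiag] at h
  rw [Equiv.swap_apply_of_ne_of_ne hj₁ hj₂, add_left_cancel h]

end Importance

theorem sum_ne_eq_sum_ne_of_eq_apply_swap {ι M : Type*} [Fintype ι] [DecidableEq ι]
    [AddCommMonoid M] {a b : ι → M} {k₁ k₂ : ι} (h : ∀ j, j ≠ k₁ → a j = b (Equiv.swap k₁ k₂ j)) :
    ∑ j with j ≠ k₁, a j = ∑ j with j ≠ k₂, b j :=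
  sum_equiv (Equiv.swap k₁ k₂) (by simp [Equiv.swap_apply_eq_iff])
    fun j hj => h j (mem_filter_univ j |>.mp hj)

section DerShap

variable {ι X : Type*} [MeasurableSpace X] (μ : Measure X) (g : ι → X → ℝ)

/-- The interaction `c(i, j)` of two inputs. The family `g` stands for the partial derivatives
`∂f_i`; any real functions on a measure space are allowed. -/
noncomputable def interaction (i j : ι) : ℝ :=
  |∫ x, g i x * g j x ∂μ|

theorem interaction_comm (i j : ι) : interaction μ g i j = interaction μ g j i := by
  simp only [interaction, mul_comm]

theorem interaction_self (i : ι) : interaction μ g i i = ∫ x, g i x ^ 2 ∂μ := by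
  simp only [interaction, ← sq]
  exact abs_of_nonneg (integral_nonneg fun x => sq_nonneg (g i x))

/-- The DerSHAP value `φ_i`, with the family `g` in the role of the partial derivatives `∂f_i`:
an input receives its own second moment and half of each of its interactions. -/
noncomputable def derShap [Fintype ι] [DecidableEq ι] (i : ι) : ℝ :=
  (∫ x, g i x ^ 2 ∂μ) + (1 / 2) * ∑ j with j ≠ i, interaction μ g i j

variable {μ g}

theorem dershap_symmetry_general [Fintype ι] [LinearOrder ι]
    (_hint : ∀ i j, Integrable (fun x => g i x * g j x) μ) {k₁ k₂ : ι}
    (hsingle : importance (interaction μ g) {k₁} = importance (interaction μ g) {k₂})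
    (hpair : ∀ j, j ≠ k₁ → j ≠ k₂ →
      importance (interaction μ g) {k₁, j} = importance (interaction μ g) {k₂, j}) :
    derShap μ g k₁ = derShap μ g k₂ := by
  have hrow := eq_apply_swap_of_importance_eq (interaction_comm μ g) hsingle hpair
  have hdiag : interaction μ g k₁ k₁ = interaction μ g k₂ k₂ := by
    simpa only [Equiv.swap_apply_left] using hrow k₁
  simp only [derShap, ← interaction_self]
  rw [hdiag, sum_ne_eq_sum_ne_of_eq_apply_swap fun j _ => hrow j]

end DerShap

/-- Symmetry property of the DerSHAP values: if inputs `k₁` and `k₂` always contribute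
equally to the derivative-based importance, then their DerSHAP values are equal. -/
theorem dershap_symmetry
    (d : ℕ) (hd : 1 ≤ d)
    (μ : Measure (Fin d → ℝ)) [IsProbabilityMeasure μ]
    (f : (Fin d → ℝ) → ℝ) (hf : Differentiable ℝ f)
    (hint : ∀ i j : Fin d,
      Integrable (fun x => fderiv ℝ f x (Pi.single i 1) * fderiv ℝ f x (Pi.single j 1)) μ)
    (c : Fin d → Fin d → ℝ)
    (hc : ∀ i j : Fin d,
      c i j = |∫ x, fderiv ℝ f x (Pi.single i 1) * fderiv ℝ f x (Pi.single j 1) ∂μ|)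
    (imp : Finset (Fin d) → ℝ)
    (himp : ∀ u : Finset (Fin d),
      imp u = ∑ i ∈ u, ∑ j ∈ u.filter (fun j => i ≤ j), c i j)
    (φ : Fin d → ℝ)
    (hφ : ∀ i : Fin d,
      φ i = (∫ x, (fderiv ℝ f x (Pi.single i 1)) ^ 2 ∂μ)
        + (1 / 2) * ∑ j ∈ univ.filter (fun j => j ≠ i), c i j)
    (k₁ k₂ : Fin d) (hne : k₁ ≠ k₂)
    (hsym : ∀ u : Finset (Fin d), u ∩ {k₁, k₂} = ∅ →
      imp (insert k₁ u) = imp (insert k₂ u)) :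
    φ k₁ = φ k₂ := by
  obtain rfl : c = interaction μ (fun i x => fderiv ℝ f x (Pi.single i 1)) := funext₂ hc
  obtain rfl : imp = importance _ := funext himp
  obtain rfl : φ = derShap μ _ := funext hφ
  exact dershap_symmetry_general hint (hsym ∅ (empty_inter _))
    fun j hj₁ hj₂ => hsym {j} (by simp [hj₁, hj₂])
end
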